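/- arXiv:1701.08597 — 2 statements merged into one kernel-verified Lean document; each statement's English description precedes it below -/
import Mathlib

section
/- A diagonalizable matrix A ∈ M_n(ℂ) satisfies A^c = A^* if and only if A is normal. -/
open Matrix Polynomial
open scoped ComplexConjugate

noncomputable section

/-- `B` is the conjugate `A^c` of `A`, defined via a Jordan-type decomposition
`A = T (D + N) T⁻¹` with `D` diagonal, `N` nilpotent commuting with `D`,
by `A^c = T ⬝ \overline{D} ⬝ T⁻¹`. -/
def Matrix.IsJordanConj {n : Type*} [Fintype n] [DecidableEq n]
    (A B : Matrix n n ℂ) : Prop :=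
  ∃ T D N : Matrix n n ℂ, IsUnit T ∧ D.IsDiag ∧ IsNilpotent N ∧ D * N = N * D ∧
    A = T * (D + N) * T⁻¹ ∧ B = T * D.map (starRingEnd ℂ) * T⁻¹

theorem isStarNormal_of_semiconjBy_star {M : Type*} [Monoid M] [Star M] {t : Mˣ} {a d : M}
    (hd : IsStarNormal d) (h : SemiconjBy ↑t d a) (h_star : SemiconjBy ↑t (star d) (star a)) :
    IsStarNormal a where
  star_comm_self := t.mul_left_inj.mp <|
    calc star a * a * t = t * (star d * d) := (h_star.mul_right h).eq.symm
      _ = t * (d * star d) := by rw [hd.star_comm_self.eq]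
      _ = a * star a * t := (h.mul_right h_star).eq

theorem conj_eq_conjTranspose_iff_normal_general {R : Type*} [CStarAlgebra R] {a d : R} (t : Rˣ)
    (hd : IsStarNormal d) (ha : a = t * d * ↑t⁻¹) :
    t * star d * ↑t⁻¹ = star a ↔ a * star a = star a * a := by
  have h : SemiconjBy ↑t d a := ha ▸ t.mk_semiconjBy d
  -- `SemiconjBy.star_right` is the Fuglede–Putnam–Rosenblum theorem.
  calc t * star d * ↑t⁻¹ = star a
      ↔ SemiconjBy ↑t (star d) (star a) := t.mul_inv_eq_iff_eq_mul
    _ ↔ IsStarNormal a :=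
      ⟨isStarNormal_of_semiconjBy_star hd h, fun ha_normal => h.star_right hd ha_normal⟩
    _ ↔ a * star a = star a * a := (isStarNormal_iff a).trans eq_comm

section Matrix

variable {n R : Type*} [CommSemiring R] [StarRing R] {D : Matrix n n R}

theorem conjTranspose_eq_map_of_isDiag (hD : D.IsDiag) : Dᴴ = D.map (starRingEnd R) := by
  classical
  rw [← hD.diagonal_diag, diagonal_conjTranspose, diagonal_map (map_zero _)]
  rfl

theorem isStarNormal_of_isDiag [Fintype n] (hD : D.IsDiag) : IsStarNormal D := by
  classical
  rw [← hD.diagonal_diag, isStarNormal_iff, star_eq_conjTranspose, diagonal_conjTranspose]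
  exact commute_diagonal _ _

end Matrix

/-- A diagonalizable matrix satisfies `A^c = A^*` iff `A` is normal. -/
theorem conj_eq_conjTranspose_iff_normal {n : ℕ} (A T D : Matrix (Fin n) (Fin n) ℂ)
    (hT : IsUnit T) (hD : D.IsDiag) (hA : A = T * D * T⁻¹) :
    T * D.map (starRingEnd ℂ) * T⁻¹ = Aᴴ ↔ A * Aᴴ = Aᴴ * A := by
  obtain ⟨T, rfl⟩ := hT
  rw [← conjTranspose_eq_map_of_isDiag hD]
  rw [← coe_units_inv] at hA ⊢
  open scoped Matrix.Norms.L2Operator in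
  exact conj_eq_conjTranspose_iff_normal_general T (isStarNormal_of_isDiag hD) hA
end
end

section
/- Let M = [[A, C],[0, B]] be block upper triangular with A ∈ M_k(ℂ), B ∈ M_m(ℂ) and σ(A) ∩ σ(B) = ∅. If X is the unique solution of the Sylvester equation AX - XB = C, then M^c = [[A^c, A^c X - X B^c],[0, B^c]]. -/
open Matrix Polynomial
open scoped ComplexConjugate

noncomputable section

/-!
The conjugate respects intertwiners: if `A * P = P * B` with `P` rectangular, then also
`A^c * P = P * B^c`. Indeed, writing `A` and `B` in the bases of their decompositions, the Sylvester
operator `Q ↦ (D + N) * Q - Q * (E + K)` is the sum of a diagonalizable and a commuting nilpotent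
operator, so its kernel lies in that of the diagonalizable part `Q ↦ D * Q - Q * E`; hence `P` links
only equal diagonal entries of `D` and `E`, and it keeps intertwining them after conjugation.

Because `A * X - X * B = C`, the block columns `[I; 0]` and `[-X; I]` intertwine `M` with `A` and
with `B` respectively, hence `M^c` with `A^c` and with `B^c`; these two relations determine `M^c`.
-/

section SylvesterOperator

variable {R m n : Type*} [CommRing R] [Fintype m] [Fintype n]

/-- The Sylvester operator `Q ↦ A * Q - Q * B` on rectangular matrices, whose kernel consists of the
matrices intertwining `A` and `B`. -/
def sylvesterOperator (A : Matrix m m R) (B : Matrix n n R) : Module.End R (Matrix m n R) :=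
  mulLeftLinearMap n R A - mulRightLinearMap m R B

theorem sylvesterOperator_apply (A : Matrix m m R) (B : Matrix n n R) (Q : Matrix m n R) :
    sylvesterOperator A B Q = A * Q - Q * B := rfl

theorem sylvesterOperator_apply_eq_zero_iff {A : Matrix m m R} {B : Matrix n n R}
    {Q : Matrix m n R} : sylvesterOperator A B Q = 0 ↔ A * Q = Q * B :=
  sub_eq_zero

theorem sylvesterOperator_add (A A' : Matrix m m R) (B B' : Matrix n n R) :
    sylvesterOperator (A + A') (B + B') = sylvesterOperator A B + sylvesterOperator A' B' := by
  ext1 Q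
  simp only [LinearMap.add_apply, sylvesterOperator_apply, Matrix.add_mul, Matrix.mul_add]
  abel

theorem commute_sylvesterOperator {A A' : Matrix m m R} {B B' : Matrix n n R}
    (hA : Commute A A') (hB : Commute B B') :
    Commute (sylvesterOperator A B) (sylvesterOperator A' B') := by
  ext1 Q
  have hAQ : A * (A' * Q) = A' * (A * Q) := by
    rw [← Matrix.mul_assoc, hA.eq, Matrix.mul_assoc]
  simp only [Module.End.mul_apply, sylvesterOperator_apply, Matrix.mul_sub, Matrix.sub_mul,
    Matrix.mul_assoc, hAQ, hB.eq]
  abel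

variable [DecidableEq m] [DecidableEq n]

theorem isNilpotent_sylvesterOperator {N : Matrix m m R} {K : Matrix n n R}
    (hN : IsNilpotent N) (hK : IsNilpotent K) : IsNilpotent (sylvesterOperator N K) := by
  refine Commute.isNilpotent_sub (commute_mulLeftLinearMap_mulRightLinearMap N K) ?_ ?_
  · exact hN.imp fun r hr => by rw [pow_mulLeftLinearMap, hr, mulLeftLinearMap_zero_eq_zero]
  · exact hK.imp fun r hr => by rw [pow_mulRightLinearMap, hr, mulRightLinearMap_zero_eq_zero]

theorem sylvesterOperator_diagonal_apply (d : m → R) (e : n → R) (Q : Matrix m n R) (i : m)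
    (j : n) : sylvesterOperator (diagonal d) (diagonal e) Q i j = (d i - e j) * Q i j := by
  rw [sylvesterOperator_apply, Matrix.sub_apply, diagonal_mul, mul_diagonal]
  ring

theorem sylvesterOperator_diagonal_pow_apply (d : m → R) (e : n → R) (r : ℕ) (Q : Matrix m n R)
    (i : m) (j : n) :
    (sylvesterOperator (diagonal d) (diagonal e) ^ r) Q i j = (d i - e j) ^ r * Q i j := by
  induction r with
  | zero => simp
  | succ r ih =>
    rw [pow_succ', Module.End.mul_apply, sylvesterOperator_diagonal_apply, ih, pow_succ', mul_assoc]

theorem sylvesterOperator_diagonal_apply_eq_zero_of_pow [IsReduced R] {d : m → R} {e : n → R}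
    {r : ℕ} {Q : Matrix m n R}
    (h : (sylvesterOperator (diagonal d) (diagonal e) ^ r) Q = 0) :
    sylvesterOperator (diagonal d) (diagonal e) Q = 0 := by
  ext i j
  have hij : (d i - e j) ^ r * Q i j = 0 := by
    rw [← sylvesterOperator_diagonal_pow_apply, h, Matrix.zero_apply]
  rw [sylvesterOperator_diagonal_apply, Matrix.zero_apply]
  refine eq_zero_of_pow_eq_zero (n := r + 1) ?_
  rw [mul_pow, pow_succ, pow_succ]
  linear_combination (d i - e j) * Q i j ^ r * hij

end SylvesterOperator

theorem exists_pow_apply_eq_zero_of_add_isNilpotent {R M : Type*} [Ring R] [AddCommGroup M]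
    [Module R M] {f g : Module.End R M} (hfg : Commute f g) (hg : IsNilpotent g) {x : M}
    (hx : (f + g) x = 0) : ∃ r : ℕ, (f ^ r) x = 0 := by
  obtain ⟨r, hr⟩ := hg.neg
  refine ⟨r, ?_⟩
  -- `f + g` is a right factor of `f ^ r - (-g) ^ r = f ^ r`
  have hgeom := hfg.neg_right.geom_sum₂_mul r
  rw [hr, sub_zero, sub_neg_eq_add] at hgeom
  rw [← hgeom, Module.End.mul_apply, hx, map_zero]

section Intertwining

variable {R m n : Type*} [CommRing R] [Fintype m] [DecidableEq m] [Fintype n] [DecidableEq n]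

theorem diagonal_mul_eq_mul_diagonal_of_add_isNilpotent [IsReduced R] {d : m → R} {e : n → R}
    {N : Matrix m m R} {K : Matrix n n R} {P : Matrix m n R}
    (hN : IsNilpotent N) (hK : IsNilpotent K)
    (hdN : Commute (diagonal d) N) (heK : Commute (diagonal e) K)
    (h : (diagonal d + N) * P = P * (diagonal e + K)) :
    diagonal d * P = P * diagonal e := by
  rw [← sylvesterOperator_apply_eq_zero_iff, sylvesterOperator_add] at h
  obtain ⟨r, hr⟩ := exists_pow_apply_eq_zero_of_add_isNilpotent
    (commute_sylvesterOperator hdN heK) (isNilpotent_sylvesterOperator hN hK) h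
  exact sylvesterOperator_apply_eq_zero_iff.mp (sylvesterOperator_diagonal_apply_eq_zero_of_pow hr)

theorem diagonal_comp_mul_eq_mul_diagonal_comp [NoZeroDivisors R] {d : m → R} {e : n → R}
    {P : Matrix m n R} (f : R → R) (h : diagonal d * P = P * diagonal e) :
    diagonal (f ∘ d) * P = P * diagonal (f ∘ e) := by
  ext i j
  have hij : d i * P i j = e j * P i j := by
    simpa only [diagonal_mul, mul_diagonal, mul_comm] using congr_fun₂ h i j
  rw [diagonal_mul, mul_diagonal, mul_comm (P i j), Function.comp_apply, Function.comp_apply]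
  rcases mul_eq_mul_right_iff.mp hij with hde | hP
  · rw [hde]
  · rw [hP, mul_zero, mul_zero]

theorem similar_mul_eq_mul_similar_iff {T U : Matrix m m R} {S V : Matrix n n R} {P : Matrix m n R}
    (hT : IsUnit T) (hS : IsUnit S) :
    T * U * T⁻¹ * P = P * (S * V * S⁻¹) ↔ U * (T⁻¹ * P * S) = T⁻¹ * P * S * V := by
  have := hT.invertible
  have := hS.invertible
  rw [← Matrix.mul_right_inj_of_invertible T⁻¹, ← Matrix.mul_left_inj_of_invertible S]
  simp only [Matrix.mul_assoc, inv_mul_cancel_left_of_invertible, inv_mul_of_invertible,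
    Matrix.mul_one]

end Intertwining

theorem mul_eq_mul_of_isJordanConj {m n : Type*} [Fintype m] [DecidableEq m] [Fintype n]
    [DecidableEq n] {A Ac : Matrix m m ℂ} {B Bc : Matrix n n ℂ} {P : Matrix m n ℂ}
    (hA : IsJordanConj A Ac) (hB : IsJordanConj B Bc) (h : A * P = P * B) :
    Ac * P = P * Bc := by
  obtain ⟨T, D, N, hT, hD, hN, hDN, rfl, rfl⟩ := hA
  obtain ⟨S, E, K, hS, hE, hK, hEK, rfl, rfl⟩ := hB
  rw [← hD.diagonal_diag] at h hDN ⊢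
  rw [← hE.diagonal_diag] at h hEK ⊢
  rw [similar_mul_eq_mul_similar_iff hT hS] at h ⊢
  rw [diagonal_map (map_zero _), diagonal_map (map_zero _)]
  exact diagonal_comp_mul_eq_mul_diagonal_comp (starRingEnd ℂ)
    (diagonal_mul_eq_mul_diagonal_of_add_isNilpotent hN hK hDN hEK h)

theorem eq_fromBlocks_iff_mul_fromRows {R m n : Type*} [Ring R] [Fintype m] [DecidableEq m]
    [Fintype n] [DecidableEq n] {A : Matrix m m R} {B : Matrix n n R} {X : Matrix m n R}
    {M : Matrix (m ⊕ n) (m ⊕ n) R} :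
    M = fromBlocks A (A * X - X * B) 0 B ↔
      M * fromRows (1 : Matrix m m R) (0 : Matrix n m R) =
          fromRows (1 : Matrix m m R) (0 : Matrix n m R) * A ∧
        M * fromRows (-X) (1 : Matrix n n R) = fromRows (-X) (1 : Matrix n n R) * B := by
  obtain ⟨P, Q, P', Q', rfl⟩ : ∃ P Q P' Q', M = fromBlocks P Q P' Q' :=
    ⟨_, _, _, _, (fromBlocks_toBlocks M).symm⟩
  simp only [fromBlocks_mul_fromRows, fromRows_mul, fromRows_ext_iff, fromBlocks_inj,
    Matrix.mul_one, Matrix.one_mul, Matrix.mul_zero, Matrix.zero_mul, Matrix.mul_neg,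
    Matrix.neg_mul, add_zero]
  constructor
  · rintro ⟨rfl, rfl, rfl, rfl⟩
    refine ⟨⟨rfl, rfl⟩, ?_, ?_⟩
    · rw [neg_add_eq_sub, sub_sub_cancel_left]
    · rw [Matrix.zero_mul, neg_zero, zero_add]
  · rintro ⟨⟨rfl, rfl⟩, hQ, hQ'⟩
    refine ⟨rfl, ?_, rfl, ?_⟩
    · rw [sub_eq_add_neg, ← hQ, add_neg_cancel_left]
    · rw [← hQ', Matrix.zero_mul, neg_zero, zero_add]

theorem conj_block_triangular_general {m n : Type*} [Fintype m] [DecidableEq m] [Fintype n]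
    [DecidableEq n] {A Ac : Matrix m m ℂ} {B Bc : Matrix n n ℂ} {C X : Matrix m n ℂ}
    {Mc : Matrix (m ⊕ n) (m ⊕ n) ℂ} (hX : A * X - X * B = C)
    (hAc : IsJordanConj A Ac) (hBc : IsJordanConj B Bc)
    (hMc : IsJordanConj (fromBlocks A C 0 B) Mc) :
    Mc = fromBlocks Ac (Ac * X - X * Bc) 0 Bc := by
  obtain ⟨hMA, hMB⟩ := eq_fromBlocks_iff_mul_fromRows.mp (congr_arg (fromBlocks A · 0 B) hX.symm)
  exact eq_fromBlocks_iff_mul_fromRows.mpr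
    ⟨mul_eq_mul_of_isJordanConj hMc hAc hMA, mul_eq_mul_of_isJordanConj hMc hBc hMB⟩

/-- The conjugate of a block upper triangular matrix with disjoint spectra,
via the Sylvester equation `AX - XB = C`. -/
theorem conj_block_triangular {k m : ℕ}
    (A : Matrix (Fin k) (Fin k) ℂ) (B : Matrix (Fin m) (Fin m) ℂ)
    (C X : Matrix (Fin k) (Fin m) ℂ)
    (hspec : spectrum ℂ A ∩ spectrum ℂ B = ∅)
    (hX : A * X - X * B = C)
    (Ac : Matrix (Fin k) (Fin k) ℂ) (Bc : Matrix (Fin m) (Fin m) ℂ)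
    (Mc : Matrix (Fin k ⊕ Fin m) (Fin k ⊕ Fin m) ℂ)
    (hAc : Matrix.IsJordanConj A Ac) (hBc : Matrix.IsJordanConj B Bc)
    (hMc : Matrix.IsJordanConj (Matrix.fromBlocks A C 0 B) Mc) :
    Mc = Matrix.fromBlocks Ac (Ac * X - X * Bc) 0 Bc :=
  conj_block_triangular_general hX hAc hBc hMc
end
end
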